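/- Let ν > 0, ξ > 0 and j, k ∈ ℕ. Then ∫₀^∞ Φ_{ξ,k}(x) Φ_{ξ,j}(x) dx = 1 if j = k, and ∫₀^∞ Φ_{ξ,k}(x) Φ_{ξ,j}(x) dx = 0 if j ≠ k; in particular the family (Φ_{ξ,k})_{k∈ℕ} is orthonormal in L²((0,∞)). -/

import Mathlib

open MeasureTheory Real Set

/-- Pochhammer symbol (rising factorial) `(c)_k = c (c+1) ⋯ (c+k−1)`. -/
noncomputable def poch (c : ℝ) (k : ℕ) : ℝ := (ascPochhammer ℝ k).eval c

/-- Kummer's confluent hypergeometric function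
`M(a,b,z) = ∑_{k=0}^∞ ((a)_k / ((b)_k · k!)) z^k`. -/
noncomputable def kummerM (a b z : ℝ) : ℝ :=
  ∑' k : ℕ, poch a k / (poch b k * (Nat.factorial k : ℝ)) * z ^ k

/-- Generalized Laguerre polynomial `L_k^{(ν)}(x) = ((1+ν)_k / k!) · M(−k, 1+ν, x)`. -/
noncomputable def laguerreL (ν : ℝ) (k : ℕ) (x : ℝ) : ℝ :=
  poch (1 + ν) k / (Nat.factorial k : ℝ) * kummerM (-(k : ℝ)) (1 + ν) x

/-- The normalized eigenfunctions
`Φ_{ξ,k}(x) = √(2ξ^{1+ν}/Γ(1+ν)) √(k!/(1+ν)_k) e^{−ξx²/2} x^{1/2+ν} L_k^{(ν)}(ξx²)`. -/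
noncomputable def PhiFun (ν ξ : ℝ) (k : ℕ) (x : ℝ) : ℝ :=
  Real.sqrt (2 * ξ ^ (1 + ν) / Real.Gamma (1 + ν)) *
    Real.sqrt ((Nat.factorial k : ℝ) / poch (1 + ν) k) *
    Real.exp (-ξ * x ^ 2 / 2) * x ^ ((1 : ℝ) / 2 + ν) * laguerreL ν k (ξ * x ^ 2)

lemma poch_pos' {b : ℝ} (hb : 0 < b) (n : ℕ) : 0 < poch b n := ascPochhammer_pos n b hb

lemma poch_add' (b : ℝ) (m n : ℕ) : poch b (m + n) = poch b m * poch (b + m) n := by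
  unfold poch
  rw [← ascPochhammer_mul]
  simp

lemma poch_neg_nat (k m : ℕ) :
    poch (-(k : ℝ)) m = (-1) ^ m * (k.choose m : ℝ) * (m.factorial : ℝ) := by
  unfold poch
  rw [ascPochhammer_eval_neg_eq_descPochhammer, descPochhammer_eval_eq_descFactorial,
    Nat.descFactorial_eq_factorial_mul_choose]
  push_cast
  ring

lemma kummer_finite (b z : ℝ) (k : ℕ) :
    kummerM (-(k : ℝ)) b z
      = ∑ m ∈ Finset.range (k + 1), ((-1) ^ m * (k.choose m : ℝ) / poch b m) * z ^ m := by
  unfold kummerM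
  rw [tsum_eq_sum (s := Finset.range (k + 1))]
  · refine Finset.sum_congr rfl fun m _ => ?_
    rw [poch_neg_nat]
    have : (m.factorial : ℝ) ≠ 0 := by positivity
    rw [mul_div_mul_right _ _ this]
  · intro m hm
    rw [poch_neg_nat, Nat.choose_eq_zero_of_lt (by simpa using hm)]
    simp

lemma gamma_poch {b : ℝ} (hb : 0 < b) (n : ℕ) :
    Real.Gamma (b + n) = poch b n * Real.Gamma b := by
  induction n with
  | zero => simp [poch]
  | succ n ih =>
    have h : b + (n : ℝ) ≠ 0 := by positivity
    push_cast
    rw [← add_assoc, Real.Gamma_add_one h, ih]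
    unfold poch
    rw [ascPochhammer_succ_eval]
    ring

lemma diff_sum (b : ℝ) (k n : ℕ) (h : n ≤ k) :
    ∑ m ∈ Finset.range (k + 1), (-1) ^ m * (k.choose m : ℝ) * poch (b + m) n
      = if n = k then (-1) ^ k * (k.factorial : ℝ) else 0 := by
  have key : ∑ m ∈ Finset.range (k + 1), (-1) ^ m * (k.choose m : ℝ) * poch (b + m) n
      = (-1) ^ k * ((fwdDiff (1 : ℝ))^[k] (fun x => (ascPochhammer ℝ n).eval x) b) := by
    rw [fwdDiff_iter_eq_sum_shift, Finset.mul_sum]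
    refine Finset.sum_congr rfl fun m hm => ?_
    have hm' : m ≤ k := by simpa [Nat.lt_succ_iff] using hm
    obtain ⟨d, rfl⟩ := Nat.exists_eq_add_of_le hm'
    have h1 : ((-1 : ℝ)) ^ d * (-1) ^ d = 1 := by
      rw [← mul_pow]; simp
    simp only [zsmul_eq_mul, nsmul_eq_mul, poch, Nat.add_sub_cancel_left]
    push_cast
    rw [pow_add, mul_one]
    linear_combination (-(-1) ^ m * ((m + d).choose m : ℝ)
      * (ascPochhammer ℝ n).eval (b + m)) * h1
  rw [key]
  split_ifs with hnk
  · subst hnk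
    have := congrFun (Polynomial.fwdDiff_iter_degree_eq_factorial (ascPochhammer ℝ n)) b
    rw [ascPochhammer_natDegree, (monic_ascPochhammer ℝ n).leadingCoeff] at this
    rw [this]
    simp
  · have := congrFun (Polynomial.fwdDiff_iter_eq_zero_of_degree_lt (P := ascPochhammer ℝ n)
      (n := k) (by rw [ascPochhammer_natDegree]; omega)) b
    rw [this]
    simp

lemma double_sum {b : ℝ} (hb : 0 < b) (j k : ℕ) (h : j ≤ k) :
    ∑ n ∈ Finset.range (j + 1), ∑ m ∈ Finset.range (k + 1),
      ((-1) ^ m * (k.choose m : ℝ) / poch b m) * ((-1) ^ n * (j.choose n : ℝ) / poch b n)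
        * poch b (m + n) = if j = k then (k.factorial : ℝ) / poch b k else 0 := by
  have h1 : ∀ n ∈ Finset.range (j + 1), ∑ m ∈ Finset.range (k + 1),
      ((-1) ^ m * (k.choose m : ℝ) / poch b m) * ((-1) ^ n * (j.choose n : ℝ) / poch b n)
        * poch b (m + n)
      = ((-1) ^ n * (j.choose n : ℝ) / poch b n) *
        (if n = k then (-1) ^ k * (k.factorial : ℝ) else 0) := by
    intro n hn
    have hn' : n ≤ j := by simpa [Nat.lt_succ_iff] using hn
    rw [← diff_sum b k n (hn'.trans h), Finset.mul_sum]
    refine Finset.sum_congr rfl fun m _ => ?_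
    have := (poch_pos' hb m).ne'
    rw [poch_add']
    field_simp
  rw [Finset.sum_congr rfl h1]
  split_ifs with hjk
  · subst hjk
    rw [Finset.sum_eq_single j]
    · have h2 : ((-1 : ℝ)) ^ j * (-1) ^ j = 1 := by
        rw [← mul_pow]; simp
      simp only [if_true, Nat.choose_self, Nat.cast_one]
      linear_combination ((j.factorial : ℝ) / poch b j) * h2
    · intro n _ hn
      simp [hn]
    · simp
  · refine Finset.sum_eq_zero fun n hn => ?_
    have hn' : n ≤ j := by simpa [Nat.lt_succ_iff] using hn
    rw [if_neg (by omega), mul_zero]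

lemma moment_integrable (ν ξ : ℝ) (hν : 0 < ν) (hξ : 0 < ξ) (n : ℕ) :
    IntegrableOn (fun x : ℝ => x ^ (1 + 2 * ν + 2 * n) * Real.exp (-ξ * x ^ (2 : ℝ))) (Ioi 0) :=
  integrableOn_rpow_mul_exp_neg_mul_rpow (by have : (0:ℝ) ≤ n := by positivity
                                             linarith) two_pos hξ

lemma moment (ν ξ : ℝ) (hν : 0 < ν) (hξ : 0 < ξ) (n : ℕ) :
    ∫ x in Ioi (0 : ℝ), x ^ (1 + 2 * ν + 2 * n) * Real.exp (-ξ * x ^ (2 : ℝ))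
      = (ξ ^ (1 + ν))⁻¹ * (ξ ^ n)⁻¹ / 2 * (poch (1 + ν) n * Real.Gamma (1 + ν)) := by
  have hn : (0:ℝ) ≤ n := by positivity
  rw [integral_rpow_mul_exp_neg_mul_rpow two_pos (by linarith) hξ,
    ← gamma_poch (by linarith : 0 < 1 + ν)]
  rw [show -(1 + 2 * ν + 2 * (n : ℝ) + 1) / 2 = -((1 + ν) + n) by ring,
    show (1 + 2 * ν + 2 * (n : ℝ) + 1) / 2 = 1 + ν + n by ring, Real.rpow_neg hξ.le,
    Real.rpow_add hξ, Real.rpow_natCast, mul_inv]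
  ring

lemma phi_prod (ν ξ : ℝ) (hν : 0 < ν) (j k : ℕ) (x : ℝ) (hx : 0 < x) :
    PhiFun ν ξ k x * PhiFun ν ξ j x =
      ∑ n ∈ Finset.range (j + 1), ∑ m ∈ Finset.range (k + 1),
        (Real.sqrt (2 * ξ ^ (1 + ν) / Real.Gamma (1 + ν)) ^ 2 *
          (Real.sqrt ((Nat.factorial k : ℝ) / poch (1 + ν) k) *
          Real.sqrt ((Nat.factorial j : ℝ) / poch (1 + ν) j)) *
          (poch (1 + ν) k / (Nat.factorial k : ℝ) * (poch (1 + ν) j / (Nat.factorial j : ℝ))) *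
          (((-1) ^ m * (k.choose m : ℝ) / poch (1 + ν) m) *
            ((-1) ^ n * (j.choose n : ℝ) / poch (1 + ν) n)) * ξ ^ (m + n)) *
        (x ^ (1 + 2 * ν + 2 * ((m + n : ℕ) : ℝ)) * Real.exp (-ξ * x ^ (2 : ℝ))) := by
  have hexp : Real.exp (-ξ * x ^ (2 : ℝ))
      = Real.exp (-ξ * x ^ 2 / 2) * Real.exp (-ξ * x ^ 2 / 2) := by
    rw [← Real.exp_add, Real.rpow_two]; congr 1; ring
  have hpow : ∀ r : ℕ, x ^ (1 + 2 * ν + 2 * (r : ℝ))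
      = x ^ ((1 : ℝ) / 2 + ν) * x ^ ((1 : ℝ) / 2 + ν) * (x ^ 2) ^ r := by
    intro r
    rw [← Real.rpow_add hx, ← pow_mul, ← Real.rpow_natCast, ← Real.rpow_add hx]
    congr 1; push_cast; ring
  simp only [hexp, hpow]
  unfold PhiFun laguerreL
  rw [kummer_finite, kummer_finite]
  generalize Real.exp (-ξ * x ^ 2 / 2) = E
  generalize x ^ ((1 : ℝ) / 2 + ν) = X
  generalize Real.sqrt (2 * ξ ^ (1 + ν) / Real.Gamma (1 + ν)) = A
  generalize Real.sqrt ((Nat.factorial k : ℝ) / poch (1 + ν) k) = B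
  generalize Real.sqrt ((Nat.factorial j : ℝ) / poch (1 + ν) j) = C
  generalize poch (1 + ν) k / (Nat.factorial k : ℝ) = D
  generalize poch (1 + ν) j / (Nat.factorial j : ℝ) = F
  simp only [Finset.mul_sum, Finset.sum_mul]
  refine Finset.sum_congr rfl fun n _ => Finset.sum_congr rfl fun m _ => ?_
  rw [mul_pow, mul_pow, pow_add, pow_add]
  ring

lemma phi_le (ν ξ : ℝ) (hν : 0 < ν) (hξ : 0 < ξ) (j k : ℕ) (h : j ≤ k) :
    ∫ x in Set.Ioi (0 : ℝ), PhiFun ν ξ k x * PhiFun ν ξ j x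
      = if j = k then 1 else 0 := by
  have hb : 0 < 1 + ν := by linarith
  rw [setIntegral_congr_fun measurableSet_Ioi
    (fun x hx => phi_prod ν ξ hν j k x hx)]
  rw [integral_finset_sum _ fun n _ => integrable_finset_sum _ fun m _ =>
    (moment_integrable ν ξ hν hξ (m + n)).const_mul _]
  simp_rw [integral_finset_sum _ fun m _ =>
    (moment_integrable ν ξ hν hξ (m + _)).const_mul _, integral_const_mul, moment ν ξ hν hξ]
  have hG : 0 < Real.Gamma (1 + ν) := Real.Gamma_pos_of_pos hb
  have hX : 0 < ξ ^ (1 + ν) := Real.rpow_pos_of_pos hξ _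
  rw [Real.sq_sqrt (by positivity)]
  have hs := double_sum hb j k h
  trans (Real.sqrt ((Nat.factorial k : ℝ) / poch (1 + ν) k) *
          Real.sqrt ((Nat.factorial j : ℝ) / poch (1 + ν) j)) *
          (poch (1 + ν) k / (Nat.factorial k : ℝ) * (poch (1 + ν) j / (Nat.factorial j : ℝ))) *
          (if j = k then (k.factorial : ℝ) / poch (1 + ν) k else 0)
  · rw [← hs, Finset.mul_sum]
    refine Finset.sum_congr rfl fun n _ => ?_
    rw [Finset.mul_sum]
    refine Finset.sum_congr rfl fun m _ => ?_
    have e1 : 2 * ξ ^ (1 + ν) / Real.Gamma (1 + ν) * ((ξ ^ (1 + ν))⁻¹ / 2 * Real.Gamma (1 + ν))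
        = 1 := by field_simp
    have e2 : ξ ^ (m + n) * (ξ ^ (m + n))⁻¹ = 1 := mul_inv_cancel₀ (by positivity)
    generalize 2 * ξ ^ (1 + ν) / Real.Gamma (1 + ν) = A at *
    generalize (ξ ^ (1 + ν))⁻¹ = B at *
    generalize (ξ ^ (m + n))⁻¹ = C at *
    generalize ξ ^ (m + n) = D at *
    generalize Real.sqrt ((Nat.factorial k : ℝ) / poch (1 + ν) k) = S
    generalize Real.sqrt ((Nat.factorial j : ℝ) / poch (1 + ν) j) = T
    generalize poch (1 + ν) k / (Nat.factorial k : ℝ) = U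
    generalize poch (1 + ν) j / (Nat.factorial j : ℝ) = V
    generalize (-1) ^ m * (k.choose m : ℝ) / poch (1 + ν) m = P
    generalize (-1) ^ n * (j.choose n : ℝ) / poch (1 + ν) n = Q
    generalize poch (1 + ν) (m + n) = R
    generalize Real.Gamma (1 + ν) = G at *
    linear_combination (S * T * U * V * P * Q * R * D * C) * e1 + (S * T * U * V * P * Q * R) * e2
  · split_ifs with hjk
    · subst hjk
      have := poch_pos' hb j
      have hf : (0 : ℝ) < j.factorial := by positivity
      rw [Real.mul_self_sqrt (by positivity)]
      field_simp
    · simp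

/-- For `ν > 0`, `ξ > 0` and `j, k ∈ ℕ`, `∫₀^∞ Φ_{ξ,k} Φ_{ξ,j} dx` equals `1` if `j = k`
and `0` otherwise: the family `(Φ_{ξ,k})_k` is orthonormal in `L²((0,∞))`. -/
theorem phi_orthonormal (ν ξ : ℝ) (hν : 0 < ν) (hξ : 0 < ξ) (j k : ℕ) :
    ∫ x in Set.Ioi (0 : ℝ), PhiFun ν ξ k x * PhiFun ν ξ j x
      = if j = k then 1 else 0 := by
  rcases le_total j k with h | h
  · exact phi_le ν ξ hν hξ j k h
  · have := phi_le ν ξ hν hξ k j h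
    simp_rw [mul_comm (PhiFun ν ξ k _)]
    rw [this]
    simp only [eq_comm]
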